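/- arXiv:1305.4449 — 2 statements merged into one kernel-verified Lean document; each statement's English description precedes it below -/
import Mathlib

section
/- Let γ > 0 and 0 < μ < 1 be real and n ≥ 1 an integer. Then the relative Fisher information of the monic Meixner polynomial satisfies [Σ_{x=0}^∞ ω(x)(M_n^{γ,μ}(x+1) − M_n^{γ,μ}(x))²] / [Σ_{x=0}^∞ ω(x) M_n^{γ,μ}(x)²] = n(1−μ)²/(μ(n+γ−1)) · Σ_{k=0}^{n-1} ((1−n)_k/(2−n−γ)_k) μ^k, where the finite sum is the terminating hypergeometric series ₂F₁(1−n, 1; 2−n−γ; μ) and all denominators (2−n−γ)_k are nonzero since γ > 0. -/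
/-- Pochhammer symbol `(a)_k = a(a+1)⋯(a+k-1)`. -/
noncomputable def poch (a : ℝ) (k : ℕ) : ℝ := ∏ i ∈ Finset.range k, (a + i)

open Polynomial Filter Topology

/-- The Meixner (negative binomial) weight. -/
noncomputable def meixnerWeight (γ μ : ℝ) (x : ℕ) : ℝ :=
  μ ^ x * Real.Gamma (γ + x) / (x.factorial * Real.Gamma γ)

/-- Summation against the Meixner weight, as a functional on polynomials. -/
noncomputable def meixnerSum (γ μ : ℝ) (p : ℝ[X]) : ℝ :=
  ∑' x : ℕ, meixnerWeight γ μ x * p.eval (x : ℝ)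

/-- The forward difference of a polynomial. -/
noncomputable def forwardDiff (p : ℝ[X]) : ℝ[X] := p.comp (X + 1) - p

/-- The raising operator, up to a factor the adjoint of the forward difference. -/
noncomputable def meixnerRaise (γ μ : ℝ) (q : ℝ[X]) : ℝ[X] :=
  C (1 - μ)⁻¹ * (X * q.comp (X - 1) - C μ * ((X + C γ) * q))

/-- The monic Meixner polynomials, built by raising operators. -/
noncomputable def meixnerPoly (μ : ℝ) : ℕ → ℝ → ℝ[X]
  | 0, _ => 1
  | n + 1, γ => meixnerRaise γ μ (meixnerPoly μ n (γ + 1))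

section Weight

variable {γ μ : ℝ}

lemma meixnerWeight_pos (hγ : 0 < γ) (hμ : 0 < μ) (x : ℕ) : 0 < meixnerWeight γ μ x := by
  have h₁ : 0 < Real.Gamma (γ + x) := Real.Gamma_pos_of_pos (by positivity)
  have h₂ : 0 < Real.Gamma γ := Real.Gamma_pos_of_pos hγ
  unfold meixnerWeight
  positivity

lemma meixnerWeight_succ (hγ : 0 < γ) (x : ℕ) :
    meixnerWeight γ μ (x + 1) * (x + 1) = μ * ((γ + x) * meixnerWeight γ μ x) := by
  have h₁ : Real.Gamma (γ + (x + 1)) = (γ + x) * Real.Gamma (γ + x) := by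
    rw [← add_assoc, Real.Gamma_add_one (by positivity)]
  have h₂ : Real.Gamma γ ≠ 0 := (Real.Gamma_pos_of_pos hγ).ne'
  have h₃ : (x.factorial : ℝ) ≠ 0 := by positivity
  have h₄ : (x : ℝ) + 1 ≠ 0 := by positivity
  unfold meixnerWeight
  push_cast [Nat.factorial_succ]
  rw [h₁]
  field_simp
  ring

lemma meixnerWeight_param_succ (hγ : 0 < γ) (x : ℕ) :
    γ * meixnerWeight (γ + 1) μ x = (γ + x) * meixnerWeight γ μ x := by
  have h₁ : Real.Gamma (γ + 1 + x) = (γ + x) * Real.Gamma (γ + x) := by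
    rw [add_right_comm, Real.Gamma_add_one (by positivity)]
  have h₂ : Real.Gamma γ ≠ 0 := (Real.Gamma_pos_of_pos hγ).ne'
  have h₃ : (x.factorial : ℝ) ≠ 0 := by positivity
  unfold meixnerWeight
  rw [h₁, Real.Gamma_add_one hγ.ne']
  field_simp

lemma summable_meixnerWeight_mul_pow (hγ : 0 < γ) (hμ0 : 0 < μ) (hμ1 : μ < 1) (k : ℕ) :
    Summable fun x : ℕ => meixnerWeight γ μ x * (x : ℝ) ^ k := by
  refine summable_of_ratio_test_tendsto_lt_one hμ1 ?_ (?_ : Tendsto _ _ (𝓝 μ))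
  · filter_upwards [eventually_gt_atTop 0] with x hx
    have := meixnerWeight_pos hγ hμ0 x
    positivity
  · have hinv : Tendsto (fun x : ℕ => ((x : ℝ))⁻¹) atTop (𝓝 0) :=
      tendsto_inv_atTop_nhds_zero_nat
    have hlim : Tendsto (fun x : ℕ => μ * (γ * (x : ℝ)⁻¹ + 1) / (1 + (x : ℝ)⁻¹) *
        (1 + (x : ℝ)⁻¹) ^ k) atTop (𝓝 (μ * (γ * 0 + 1) / (1 + 0) * (1 + 0) ^ k)) :=
      ((((hinv.const_mul γ).add_const 1).const_mul μ).div (hinv.const_add 1) (by norm_num)).mul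
        ((hinv.const_add 1).pow k)
    simp only [mul_zero, zero_add, mul_one, add_zero, div_one, one_pow] at hlim
    refine hlim.congr' ?_
    filter_upwards [eventually_gt_atTop 0] with x hx
    have hx' : (0 : ℝ) < x := by exact_mod_cast hx
    have hw := meixnerWeight_pos hγ hμ0 x
    have hw' := meixnerWeight_pos hγ hμ0 (x + 1)
    have hs : meixnerWeight γ μ (x + 1) = μ * ((γ + x) * meixnerWeight γ μ x) / (x + 1) := by
      rw [← meixnerWeight_succ hγ, mul_div_cancel_right₀ _ (by positivity)]
    rw [Real.norm_of_nonneg (by positivity), Real.norm_of_nonneg (by positivity), hs]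
    have hp : (1 + (x : ℝ)⁻¹) ^ k = ((x : ℝ) + 1) ^ k / (x : ℝ) ^ k := by
      rw [← div_pow]; congr 1; field_simp
    rw [hp]
    push_cast
    field_simp

lemma summable_meixnerWeight_mul_eval (hγ : 0 < γ) (hμ0 : 0 < μ) (hμ1 : μ < 1) (p : ℝ[X]) :
    Summable fun x : ℕ => meixnerWeight γ μ x * p.eval (x : ℝ) := by
  induction p using Polynomial.induction_on' with
  | add p q hp hq => simpa only [eval_add, mul_add] using hp.add hq
  | monomial k a =>
    refine ((summable_meixnerWeight_mul_pow hγ hμ0 hμ1 k).mul_left a).congr fun x => ?_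
    rw [eval_monomial]; ring

end Weight

section Functional

variable {γ μ : ℝ}

lemma meixnerSum_add (hγ : 0 < γ) (hμ0 : 0 < μ) (hμ1 : μ < 1) (p q : ℝ[X]) :
    meixnerSum γ μ (p + q) = meixnerSum γ μ p + meixnerSum γ μ q := by
  simp only [meixnerSum, eval_add, mul_add]
  exact (summable_meixnerWeight_mul_eval hγ hμ0 hμ1 p).tsum_add
    (summable_meixnerWeight_mul_eval hγ hμ0 hμ1 q)

lemma meixnerSum_C_mul (γ μ a : ℝ) (p : ℝ[X]) :
    meixnerSum γ μ (C a * p) = a * meixnerSum γ μ p := by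
  simp only [meixnerSum, eval_mul, eval_C, ← tsum_mul_left]
  exact tsum_congr fun x => by ring

lemma meixnerSum_sub (hγ : 0 < γ) (hμ0 : 0 < μ) (hμ1 : μ < 1) (p q : ℝ[X]) :
    meixnerSum γ μ (p - q) = meixnerSum γ μ p - meixnerSum γ μ q := by
  have := meixnerSum_add hγ hμ0 hμ1 (p - q) q
  rw [sub_add_cancel] at this
  linarith

lemma meixnerSum_mul_self_pos (hγ : 0 < γ) (hμ0 : 0 < μ) (hμ1 : μ < 1) {p : ℝ[X]}
    (hp : p ≠ 0) : 0 < meixnerSum γ μ (p * p) := by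
  obtain ⟨x, hx⟩ : ∃ x : ℕ, p.eval (x : ℝ) ≠ 0 := by
    by_contra! h
    refine hp (p.eq_zero_of_infinite_isRoot ?_)
    exact (Set.infinite_range_of_injective Nat.cast_injective).mono
      (Set.range_subset_iff.2 fun x : ℕ => h x)
  refine (summable_meixnerWeight_mul_eval hγ hμ0 hμ1 (p * p)).tsum_pos (fun y => ?_) x ?_
  · rw [eval_mul]
    exact mul_nonneg (meixnerWeight_pos hγ hμ0 y).le (mul_self_nonneg _)
  · rw [eval_mul]
    exact mul_pos (meixnerWeight_pos hγ hμ0 x) (mul_self_pos.2 hx)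

lemma meixnerSum_X_mul (hγ : 0 < γ) (hμ0 : 0 < μ) (hμ1 : μ < 1) (p : ℝ[X]) :
    meixnerSum γ μ (X * p) = μ * meixnerSum γ μ ((X + C γ) * p.comp (X + 1)) := by
  unfold meixnerSum
  rw [(summable_meixnerWeight_mul_eval hγ hμ0 hμ1 (X * p)).tsum_eq_zero_add, ← tsum_mul_left]
  simp only [Nat.cast_zero, eval_mul, eval_X, zero_mul, mul_zero, zero_add]
  refine tsum_congr fun x => ?_
  have := meixnerWeight_succ (μ := μ) hγ x
  simp only [eval_add, eval_X, eval_C, eval_comp, eval_one]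
  push_cast
  linear_combination p.eval ((x : ℝ) + 1) * this

lemma meixnerSum_param_succ (hγ : 0 < γ) (p : ℝ[X]) :
    γ * meixnerSum (γ + 1) μ p = meixnerSum γ μ ((X + C γ) * p) := by
  unfold meixnerSum
  rw [← tsum_mul_left]
  refine tsum_congr fun x => ?_
  have := meixnerWeight_param_succ (μ := μ) hγ x
  simp only [eval_mul, eval_add, eval_X, eval_C]
  linear_combination p.eval (x : ℝ) * this

lemma meixnerSum_one_param_succ (hγ : 0 < γ) (hμ0 : 0 < μ) (hμ1 : μ < 1) :
    (1 - μ) * meixnerSum (γ + 1) μ 1 = meixnerSum γ μ 1 := by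
  have h₁ := meixnerSum_X_mul hγ hμ0 hμ1 1
  have h₂ := meixnerSum_param_succ (μ := μ) hγ 1
  have h₃ := meixnerSum_add hγ hμ0 hμ1 X (C γ * 1)
  rw [meixnerSum_C_mul] at h₃
  simp only [mul_one, one_comp] at h₁ h₂ h₃
  refine mul_left_cancel₀ hγ.ne' ?_
  linear_combination (1 - μ) * h₂ + h₃ + h₁

/-- Summation by parts: the raising operator is adjoint to the forward difference. -/
lemma meixnerSum_raise_mul (hγ : 0 < γ) (hμ0 : 0 < μ) (hμ1 : μ < 1) (q p : ℝ[X]) :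
    meixnerSum γ μ (meixnerRaise γ μ q * p) =
      μ * γ / (1 - μ) * meixnerSum (γ + 1) μ (q * forwardDiff p) := by
  have hexpand : meixnerRaise γ μ q * p =
      C (1 - μ)⁻¹ * (X * (q.comp (X - 1) * p) - C μ * ((X + C γ) * (q * p))) := by
    unfold meixnerRaise; ring
  have hshift : (q.comp (X - 1) * p).comp (X + 1) = q * p.comp (X + 1) := by
    simp [mul_comp, comp_assoc]
  rw [hexpand, meixnerSum_C_mul, meixnerSum_sub hγ hμ0 hμ1, meixnerSum_C_mul,
    meixnerSum_X_mul hγ hμ0 hμ1, hshift, ← meixnerSum_param_succ hγ, ← meixnerSum_param_succ hγ,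
    forwardDiff, mul_sub q, meixnerSum_sub (γ := γ + 1) (by positivity) hμ0 hμ1]
  ring

lemma meixnerSum_mul_eq_zero_of_pow (hγ : 0 < γ) (hμ0 : 0 < μ) (hμ1 : μ < 1) {n : ℕ}
    {M : ℝ[X]} (hM : ∀ k < n, meixnerSum γ μ (M * X ^ k) = 0) {p : ℝ[X]} (hp : p.degree < n) :
    meixnerSum γ μ (M * p) = 0 := by
  rw [← mem_degreeLT, degreeLT_eq_span_X_pow] at hp
  induction hp using Submodule.span_induction with
  | mem q hq =>
    obtain ⟨k, hk, rfl⟩ := by simpa using hq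
    exact hM k hk
  | zero => simp [meixnerSum]
  | add q r _ _ hq hr => rw [mul_add, meixnerSum_add hγ hμ0 hμ1, hq, hr, add_zero]
  | smul a q _ hq => rw [smul_eq_C_mul, mul_left_comm, meixnerSum_C_mul, hq, mul_zero]

end Functional

section Family

variable {μ : ℝ}

lemma degree_forwardDiff_lt {n : ℕ} {p : ℝ[X]} (hp : p.degree < (n + 1 : ℕ)) :
    (forwardDiff p).degree < n := by
  by_cases h0 : p = 0
  · simp [forwardDiff, h0]
  have ht : p.comp (X + 1) = taylor 1 p := by simp [taylor_apply]
  have hlt : (taylor 1 p - p).degree < (taylor 1 p).degree :=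
    degree_sub_lt_left (by simp) (by simpa using h0) (by simp)
  rw [degree_taylor] at hlt
  rw [forwardDiff, ht]
  refine hlt.trans_le ?_
  rw [degree_eq_natDegree h0] at hp ⊢
  have : p.natDegree < n + 1 := by exact_mod_cast hp
  exact_mod_cast Nat.lt_succ_iff.1 this

lemma meixnerRaise_monic (γ : ℝ) (hμ1 : μ < 1) {q : ℝ[X]} (hq : q.Monic) :
    (meixnerRaise γ μ q).Monic ∧ (meixnerRaise γ μ q).natDegree = q.natDegree + 1 := by
  have hX : (X - 1 : ℝ[X]) = X - C 1 := by simp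
  have hc : (q.comp (X - C 1)).Monic :=
    hq.comp (monic_X_sub_C 1) (by rw [natDegree_X_sub_C]; exact one_ne_zero)
  have hcd : (q.comp (X - C 1)).natDegree = q.natDegree := by
    rw [natDegree_comp, natDegree_X_sub_C, mul_one]
  have hm₁ : (X * q.comp (X - C 1)).Monic := monic_X.mul hc
  have hd₁ : (X * q.comp (X - C 1)).natDegree = q.natDegree + 1 := by
    rw [monic_X.natDegree_mul hc, hcd, natDegree_X, add_comm]
  have hm₂ : ((X + C γ) * q).Monic := (monic_X_add_C γ).mul hq
  have hd₂ : ((X + C γ) * q).natDegree = q.natDegree + 1 := by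
    rw [(monic_X_add_C γ).natDegree_mul hq, natDegree_X_add_C, add_comm]
  have hle : (meixnerRaise γ μ q).natDegree ≤ q.natDegree + 1 := by
    rw [meixnerRaise, hX]
    refine (natDegree_C_mul_le _ _).trans ((natDegree_sub_le _ _).trans (max_le hd₁.le ?_))
    exact (natDegree_C_mul_le _ _).trans hd₂.le
  have hcoeff : (meixnerRaise γ μ q).coeff (q.natDegree + 1) = 1 := by
    have h₁ : (X * q.comp (X - C 1)).coeff (q.natDegree + 1) = 1 := hd₁ ▸ hm₁.coeff_natDegree
    have h₂ : ((X + C γ) * q).coeff (q.natDegree + 1) = 1 := hd₂ ▸ hm₂.coeff_natDegree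
    rw [meixnerRaise, hX, coeff_C_mul, coeff_sub, coeff_C_mul, h₁, h₂, mul_one]
    exact inv_mul_cancel₀ (sub_pos.2 hμ1).ne'
  exact ⟨monic_of_natDegree_le_of_coeff_eq_one _ hle hcoeff,
    natDegree_eq_of_le_of_coeff_ne_zero hle (by rw [hcoeff]; exact one_ne_zero)⟩

lemma meixnerPoly_monic (hμ1 : μ < 1) (n : ℕ) (γ : ℝ) :
    (meixnerPoly μ n γ).Monic ∧ (meixnerPoly μ n γ).natDegree = n := by
  induction n generalizing γ with
  | zero => simp [meixnerPoly]
  | succ n ih =>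
    have h := meixnerRaise_monic γ hμ1 (ih (γ + 1)).1
    rw [(ih (γ + 1)).2] at h
    exact h

lemma meixnerRaise_add_C_mul (γ : ℝ) (a : ℝ) (p q : ℝ[X]) :
    meixnerRaise γ μ (p + C a * q) = meixnerRaise γ μ p + C a * meixnerRaise γ μ q := by
  simp only [meixnerRaise, add_comp, mul_comp, C_comp]
  ring

lemma meixnerRaise_C_mul (γ : ℝ) (a : ℝ) (q : ℝ[X]) :
    meixnerRaise γ μ (C a * q) = C a * meixnerRaise γ μ q := by
  simp only [meixnerRaise, mul_comp, C_comp]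
  ring

lemma meixnerRaise_param_succ (γ : ℝ) (q : ℝ[X]) :
    meixnerRaise γ μ q = meixnerRaise (γ + 1) μ q + C (μ / (1 - μ)) * q := by
  simp only [meixnerRaise, div_eq_mul_inv, C_mul, C_add, C_1]
  ring

lemma forwardDiff_meixnerRaise (hμ1 : μ < 1) (γ : ℝ) (q : ℝ[X]) :
    forwardDiff (meixnerRaise γ μ q) = meixnerRaise (γ + 1) μ (forwardDiff q) + q := by
  have h : (1 - μ) ≠ 0 := (sub_pos.2 hμ1).ne'
  refine Polynomial.funext fun x => ?_
  simp only [forwardDiff, meixnerRaise, eval_add, eval_sub, eval_mul, eval_comp, eval_C, eval_X,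
    eval_one, sub_add_cancel, add_sub_cancel_right]
  field_simp
  ring

lemma forwardDiff_meixnerPoly_succ (hμ1 : μ < 1) (n : ℕ) (γ : ℝ) :
    forwardDiff (meixnerPoly μ (n + 1) γ) = C ((n : ℝ) + 1) * meixnerPoly μ n (γ + 1) := by
  induction n generalizing γ with
  | zero =>
    change forwardDiff (meixnerRaise γ μ 1) = _
    rw [forwardDiff_meixnerRaise hμ1]
    simp [meixnerPoly, forwardDiff, meixnerRaise]
  | succ n ih =>
    rw [meixnerPoly, forwardDiff_meixnerRaise hμ1, ih (γ + 1), meixnerRaise_C_mul]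
    change C ((n : ℝ) + 1) * meixnerPoly μ (n + 1) (γ + 1) + meixnerPoly μ (n + 1) (γ + 1) = _
    push_cast
    simp only [C_add, C_1]
    ring

/-- The contiguous relation in the parameter. -/
lemma meixnerPoly_succ_contiguous (n : ℕ) (γ : ℝ) :
    meixnerPoly μ (n + 1) γ = meixnerPoly μ (n + 1) (γ + 1) +
      C (((n : ℝ) + 1) * (μ / (1 - μ))) * meixnerPoly μ n (γ + 1) := by
  induction n generalizing γ with
  | zero =>
    change meixnerRaise γ μ 1 = meixnerRaise (γ + 1) μ 1 + _ * 1
    rw [meixnerRaise_param_succ]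
    simp
  | succ n ih =>
    have h₁ : meixnerPoly μ (n + 1 + 1) γ = meixnerRaise γ μ (meixnerPoly μ (n + 1) (γ + 1)) := rfl
    have h₂ : meixnerPoly μ (n + 1 + 1) (γ + 1) =
      meixnerRaise (γ + 1) μ (meixnerPoly μ (n + 1) (γ + 1 + 1)) := rfl
    have h₃ : meixnerPoly μ (n + 1) (γ + 1) =
      meixnerRaise (γ + 1) μ (meixnerPoly μ n (γ + 1 + 1)) := rfl
    have h₄ : meixnerRaise (γ + 1) μ (meixnerPoly μ (n + 1) (γ + 1)) =
        meixnerPoly μ (n + 1 + 1) (γ + 1) +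
          C (((n : ℝ) + 1) * (μ / (1 - μ))) * meixnerPoly μ (n + 1) (γ + 1) := by
      rw [h₂, h₃, ← meixnerRaise_add_C_mul, ← ih (γ + 1), h₃]
    rw [h₁, meixnerRaise_param_succ, h₄]
    push_cast
    simp only [C_add, C_mul, C_1]
    ring

lemma meixnerSum_meixnerPoly_mul_eq_zero {γ : ℝ} (hγ : 0 < γ) (hμ0 : 0 < μ) (hμ1 : μ < 1)
    (n : ℕ) {p : ℝ[X]} (hp : p.degree < n) : meixnerSum γ μ (meixnerPoly μ n γ * p) = 0 := by
  induction n generalizing γ p with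
  | zero =>
    have : p = 0 := by
      rw [← degree_eq_bot]
      exact Nat.WithBot.lt_zero_iff.1 (by simpa using hp)
    simp [this, meixnerSum]
  | succ n ih =>
    rw [meixnerPoly, meixnerSum_raise_mul hγ hμ0 hμ1,
      ih (by positivity) (degree_forwardDiff_lt hp), mul_zero]

lemma meixnerSum_sq_succ_param {γ : ℝ} (hγ : 0 < γ) (hμ0 : 0 < μ) (hμ1 : μ < 1) (n : ℕ) :
    meixnerSum γ μ (meixnerPoly μ (n + 1) γ * meixnerPoly μ (n + 1) γ) =
      μ * γ / (1 - μ) * ((n + 1) *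
        meixnerSum (γ + 1) μ (meixnerPoly μ n (γ + 1) * meixnerPoly μ n (γ + 1))) := by
  conv_lhs => enter [3, 1]; rw [meixnerPoly]
  rw [meixnerSum_raise_mul hγ hμ0 hμ1, forwardDiff_meixnerPoly_succ hμ1, mul_left_comm,
    meixnerSum_C_mul]

/-- The ratio of consecutive squared norms. -/
lemma meixnerSum_sq_succ {γ : ℝ} (hγ : 0 < γ) (hμ0 : 0 < μ) (hμ1 : μ < 1) (n : ℕ) :
    meixnerSum γ μ (meixnerPoly μ (n + 1) γ * meixnerPoly μ (n + 1) γ) =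
      (n + 1) * (γ + n) * μ / (1 - μ) ^ 2 *
        meixnerSum γ μ (meixnerPoly μ n γ * meixnerPoly μ n γ) := by
  have h : (1 - μ) ≠ 0 := (sub_pos.2 hμ1).ne'
  induction n generalizing γ with
  | zero =>
    rw [meixnerSum_sq_succ_param hγ hμ0 hμ1]
    simp only [meixnerPoly, mul_one]
    rw [← meixnerSum_one_param_succ hγ hμ0 hμ1]
    field_simp
    push_cast
    ring
  | succ n ih =>
    rw [meixnerSum_sq_succ_param hγ hμ0 hμ1, ih (by positivity),
      meixnerSum_sq_succ_param hγ hμ0 hμ1]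
    push_cast
    ring

/-- A monic polynomial of degree `n` orthogonal to all lower powers is the Meixner polynomial. -/
lemma eq_meixnerPoly {γ : ℝ} (hγ : 0 < γ) (hμ0 : 0 < μ) (hμ1 : μ < 1) {n : ℕ} {M : ℝ[X]}
    (hmonic : M.Monic) (hdeg : M.natDegree = n)
    (hM : ∀ k < n, meixnerSum γ μ (M * X ^ k) = 0) : M = meixnerPoly μ n γ := by
  obtain ⟨hPm, hPd⟩ := meixnerPoly_monic hμ1 n γ
  by_contra hne
  have hlt : (M - meixnerPoly μ n γ).degree < n := by
    have hMd : M.degree = n := by rw [degree_eq_natDegree hmonic.ne_zero, hdeg]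
    rw [← hMd]
    refine degree_sub_lt_left ?_ hmonic.ne_zero (by rw [hmonic.leadingCoeff, hPm.leadingCoeff])
    rw [hMd, degree_eq_natDegree hPm.ne_zero, hPd]
  have hpos := meixnerSum_mul_self_pos hγ hμ0 hμ1 (sub_ne_zero.2 hne)
  rw [sub_mul, meixnerSum_sub hγ hμ0 hμ1, meixnerSum_mul_eq_zero_of_pow hγ hμ0 hμ1 hM hlt,
    meixnerSum_meixnerPoly_mul_eq_zero hγ hμ0 hμ1 n hlt, sub_zero] at hpos
  exact hpos.false

end Family

lemma poch_succ_left (a : ℝ) (k : ℕ) : poch a (k + 1) = a * poch (a + 1) k := by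
  rw [poch, poch, Finset.prod_range_succ', mul_comm]
  congr 1
  · simp
  · exact Finset.prod_congr rfl fun i _ => by push_cast; ring

/-- Recursion in `n` of the terminating series `₂F₁(1-n, 1; 2-n-γ; μ)`. -/
lemma sum_poch_div_poch_succ (γ μ : ℝ) (n : ℕ) :
    ∑ k ∈ Finset.range (n + 2),
        poch (1 - ((n + 2 : ℕ) : ℝ)) k / poch (2 - ((n + 2 : ℕ) : ℝ) - γ) k * μ ^ k =
      1 + (n + 1) / (γ + n) * μ * ∑ k ∈ Finset.range (n + 1),
        poch (1 - ((n + 1 : ℕ) : ℝ)) k / poch (2 - ((n + 1 : ℕ) : ℝ) - γ) k * μ ^ k := by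
  rw [Finset.sum_range_succ', add_comm]
  congr 1
  · simp [poch]
  · rw [Finset.mul_sum]
    refine Finset.sum_congr rfl fun k _ => ?_
    rw [poch_succ_left, poch_succ_left, mul_div_mul_comm]
    have h₁ : (1 - ((n + 2 : ℕ) : ℝ)) / (2 - ((n + 2 : ℕ) : ℝ) - γ) = (n + 1) / (γ + n) := by
      rw [← neg_div_neg_eq]
      push_cast
      congr 1 <;> ring
    have h₂ : 1 - ((n + 2 : ℕ) : ℝ) + 1 = 1 - ((n + 1 : ℕ) : ℝ) := by push_cast; ring
    have h₃ : 2 - ((n + 2 : ℕ) : ℝ) - γ + 1 = 2 - ((n + 1 : ℕ) : ℝ) - γ := by push_cast; ring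
    rw [h₁, h₂, h₃]
    ring

/-- The squared norm of the parameter-shifted Meixner polynomial in the unshifted weight. -/
lemma meixnerSum_sq_shifted {γ μ : ℝ} (hγ : 0 < γ) (hμ0 : 0 < μ) (hμ1 : μ < 1) (n : ℕ) :
    meixnerSum γ μ (meixnerPoly μ n (γ + 1) * meixnerPoly μ n (γ + 1)) =
      meixnerSum γ μ (meixnerPoly μ n γ * meixnerPoly μ n γ) * ∑ k ∈ Finset.range (n + 1),
        poch (1 - ((n + 1 : ℕ) : ℝ)) k / poch (2 - ((n + 1 : ℕ) : ℝ) - γ) k * μ ^ k := by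
  have h : (1 - μ) ≠ 0 := (sub_pos.2 hμ1).ne'
  induction n with
  | zero => simp [meixnerPoly, poch]
  | succ n ih =>
    set c : ℝ := ((n : ℝ) + 1) * (μ / (1 - μ)) with hc
    have hsplit : meixnerPoly μ (n + 1) (γ + 1) * meixnerPoly μ (n + 1) (γ + 1) =
        meixnerPoly μ (n + 1) γ * meixnerPoly μ (n + 1) γ -
          C (2 * c) * (meixnerPoly μ (n + 1) γ * meixnerPoly μ n (γ + 1)) +
          C (c ^ 2) * (meixnerPoly μ n (γ + 1) * meixnerPoly μ n (γ + 1)) := by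
      rw [meixnerPoly_succ_contiguous n γ, ← hc]
      simp only [C_mul, C_pow, C_ofNat]
      ring
    have horth : meixnerSum γ μ (meixnerPoly μ (n + 1) γ * meixnerPoly μ n (γ + 1)) = 0 := by
      refine meixnerSum_meixnerPoly_mul_eq_zero hγ hμ0 hμ1 (n + 1) ?_
      obtain ⟨hm, hd⟩ := meixnerPoly_monic hμ1 n (γ + 1)
      rw [degree_eq_natDegree hm.ne_zero, hd]
      exact_mod_cast n.lt_succ_self
    have hγn : γ + n ≠ 0 := by positivity
    rw [hsplit, meixnerSum_add hγ hμ0 hμ1, meixnerSum_sub hγ hμ0 hμ1, meixnerSum_C_mul,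
      meixnerSum_C_mul, horth, ih, sum_poch_div_poch_succ, meixnerSum_sq_succ hγ hμ0 hμ1, hc]
    field_simp
    ring

/-- The relative Fisher information of the monic Meixner polynomial of degree `n ≥ 1`
with respect to the negative binomial weight `ω(x) = μ^x Γ(γ+x)/(x! Γ(γ))` equals
`n(1-μ)²/(μ(n+γ-1)) · ₂F₁(1-n, 1; 2-n-γ; μ)`. -/
theorem meixner_relative_fisher
    (γ μ : ℝ) (hγ : 0 < γ) (hμ0 : 0 < μ) (hμ1 : μ < 1)
    (n : ℕ) (hn : 1 ≤ n)
    (M : Polynomial ℝ) (hmonic : M.Monic) (hdeg : M.natDegree = n)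
    (horth : ∀ k : ℕ, k < n →
      ∑' x : ℕ, (μ ^ x * Real.Gamma (γ + x) / (x.factorial * Real.Gamma γ)) *
        M.eval (x : ℝ) * (x : ℝ) ^ k = 0) :
    (∑' x : ℕ, (μ ^ x * Real.Gamma (γ + x) / (x.factorial * Real.Gamma γ)) *
        (M.eval ((x : ℝ) + 1) - M.eval (x : ℝ)) ^ 2) /
      (∑' x : ℕ, (μ ^ x * Real.Gamma (γ + x) / (x.factorial * Real.Gamma γ)) *
        (M.eval (x : ℝ)) ^ 2)
    = n * (1 - μ) ^ 2 / (μ * ((n : ℝ) + γ - 1)) *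
        ∑ k ∈ Finset.range n, poch (1 - (n : ℝ)) k / poch (2 - (n : ℝ) - γ) k * μ ^ k := by
  obtain ⟨n, rfl⟩ : ∃ m, n = m + 1 := ⟨n - 1, by omega⟩
  have hM : M = meixnerPoly μ (n + 1) γ := by
    refine eq_meixnerPoly hγ hμ0 hμ1 hmonic hdeg fun k hk => ?_
    rw [← horth k hk]
    exact tsum_congr fun x => by simp [meixnerWeight, mul_assoc]
  have hden : (∑' x : ℕ, (μ ^ x * Real.Gamma (γ + x) / (x.factorial * Real.Gamma γ)) *
      (M.eval (x : ℝ)) ^ 2) = meixnerSum γ μ (M * M) :=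
    tsum_congr fun x => by simp [meixnerWeight, sq]
  have hnum : (∑' x : ℕ, (μ ^ x * Real.Gamma (γ + x) / (x.factorial * Real.Gamma γ)) *
      (M.eval ((x : ℝ) + 1) - M.eval (x : ℝ)) ^ 2) =
        meixnerSum γ μ (forwardDiff M * forwardDiff M) :=
    tsum_congr fun x => by simp [meixnerWeight, forwardDiff, sq]
  have hsq : C ((n : ℝ) + 1) * meixnerPoly μ n (γ + 1) *
      (C ((n : ℝ) + 1) * meixnerPoly μ n (γ + 1)) =
        C (((n : ℝ) + 1) ^ 2) * (meixnerPoly μ n (γ + 1) * meixnerPoly μ n (γ + 1)) := by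
    rw [C_pow]; ring
  rw [hnum, hden, hM, forwardDiff_meixnerPoly_succ hμ1, hsq, meixnerSum_C_mul,
    meixnerSum_sq_shifted hγ hμ0 hμ1, meixnerSum_sq_succ hγ hμ0 hμ1]
  have hpos := meixnerSum_mul_self_pos hγ hμ0 hμ1 (meixnerPoly_monic hμ1 n γ).1.ne_zero
  have h : (1 - μ) ≠ 0 := (sub_pos.2 hμ1).ne'
  have hγn : γ + n ≠ 0 := by positivity
  have hcast : ((n + 1 : ℕ) : ℝ) + γ - 1 = γ + n := by push_cast; ring
  rw [hcast]
  generalize (∑ k ∈ Finset.range (n + 1),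
    poch (1 - ((n + 1 : ℕ) : ℝ)) k / poch (2 - ((n + 1 : ℕ) : ℝ) - γ) k * μ ^ k) = S
  push_cast
  field_simp
end

section
/- Let N ≥ 1 be an integer, 0 < p < 1 real, and 1 ≤ n ≤ N−1 an integer. Then the forward difference of the monic Kravchuk polynomial of degree n satisfies, for all real x, K_n^p(x+1, N) − K_n^p(x, N) = n Σ_{j=0}^{n-1} (j+1)_{n-j-1} p^{n-j-1} K_j^p(x, N). -/
open Polynomial in
/-- Shifting the argument does not change the top coefficient of a polynomial. -/
lemma coeff_taylor_of_natDegree_le {f : ℝ[X]} {d i : ℕ} (r : ℝ) (hf : f.natDegree ≤ d)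
    (hi : d ≤ i) : (taylor r f).coeff i = f.coeff i := by
  have hdeg : (hasseDeriv i f).natDegree < 1 :=
    lt_of_le_of_lt (natDegree_hasseDeriv_le f i) (by omega)
  rw [taylor_coeff, eval_eq_sum_range' hdeg]
  simp [hasseDeriv_coeff]

open Polynomial in
/-- The coefficient just below the top one after a unit shift of the argument. -/
lemma coeff_taylor_one_of_natDegree_le {f : ℝ[X]} {d : ℕ} (hf : f.natDegree ≤ d + 1) :
    (taylor 1 f).coeff d = f.coeff d + (d + 1) * f.coeff (d + 1) := by
  have hdeg : (hasseDeriv d f).natDegree < 2 :=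
    lt_of_le_of_lt (natDegree_hasseDeriv_le f d) (by omega)
  rw [taylor_coeff, eval_eq_sum_range' hdeg]
  simp [Finset.sum_range_succ, hasseDeriv_coeff, add_comm 1 d]

/-- The binomial weight on `{0, …, N}`. -/
noncomputable def kravchukWeight (N : ℕ) (p : ℝ) (x : ℕ) : ℝ :=
  (N.choose x : ℝ) * p ^ x * (1 - p) ^ (N - x)

lemma kravchukWeight_pos {N x : ℕ} {p : ℝ} (hp0 : 0 < p) (hp1 : p < 1) (hx : x ≤ N) :
    0 < kravchukWeight N p x := by
  have h1 : 0 < 1 - p := by linarith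
  have h2 : 0 < N.choose x := Nat.choose_pos hx
  unfold kravchukWeight
  positivity

/-- Raising the number of trials by one, in case the additional trial fails. -/
lemma sum_kravchukWeight_failure (M : ℕ) (p : ℝ) (h : ℝ → ℝ) :
    (M + 1) * (1 - p) * ∑ x ∈ Finset.range (M + 1), kravchukWeight M p x * h x =
      ∑ x ∈ Finset.range (M + 1 + 1), kravchukWeight (M + 1) p x * ((M + 1 - x) * h x) := by
  rw [Finset.sum_range_succ _ (M + 1), Finset.mul_sum]
  push_cast
  rw [sub_self, zero_mul, mul_zero, add_zero]
  refine Finset.sum_congr rfl fun x hx => ?_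
  have hx : x ≤ M := by simpa [Nat.lt_succ_iff] using hx
  have hc : (M.choose x : ℝ) * (M + 1) = (M + 1).choose x * (M + 1 - x) := by
    have := congrArg (Nat.cast (R := ℝ)) (Nat.choose_mul_succ_eq M x)
    rw [Nat.cast_mul, Nat.cast_mul, Nat.cast_sub (by omega)] at this
    exact_mod_cast this
  unfold kravchukWeight
  rw [Nat.sub_add_comm hx, pow_succ]
  linear_combination (1 - p) * p ^ x * (1 - p) ^ (M - x) * h x * hc

/-- Raising the number of trials by one, in case the additional trial succeeds. -/
lemma sum_kravchukWeight_success (M : ℕ) (p : ℝ) (h : ℝ → ℝ) :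
    (M + 1) * p * ∑ x ∈ Finset.range (M + 1), kravchukWeight M p x * h (x + 1) =
      ∑ x ∈ Finset.range (M + 1 + 1), kravchukWeight (M + 1) p x * (x * h x) := by
  rw [Finset.sum_range_succ' _ (M + 1), Finset.mul_sum]
  simp only [Nat.cast_zero, zero_mul, mul_zero, add_zero]
  refine Finset.sum_congr rfl fun x _ => ?_
  have hc : ((M : ℝ) + 1) * M.choose x = (M + 1).choose (x + 1) * (x + 1) := by
    exact_mod_cast Nat.add_one_mul_choose_eq M x
  unfold kravchukWeight
  rw [Nat.add_sub_add_right, pow_succ]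
  push_cast
  linear_combination p * p ^ x * (1 - p) ^ (M - x) * h (x + 1) * hc

open Polynomial in
/-- Orthogonality to low powers gives orthogonality to all polynomials of low degree. -/
lemma sum_kravchukWeight_mul_eval_eq_zero {N d : ℕ} {p : ℝ} {f g : ℝ[X]}
    (hf : ∀ k < d, ∑ x ∈ Finset.range (N + 1),
      kravchukWeight N p x * f.eval (x : ℝ) * (x : ℝ) ^ k = 0)
    (hg : g.degree < d) :
    ∑ x ∈ Finset.range (N + 1), kravchukWeight N p x * (f.eval (x : ℝ) * g.eval (x : ℝ)) = 0 := by
  have hg' : ∀ x : ℝ, g.eval x = ∑ k ∈ Finset.range d, g.coeff k * x ^ k := by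
    intro x
    rcases eq_or_ne g 0 with rfl | h0
    · simp
    · exact eval_eq_sum_range' ((natDegree_lt_iff_degree_lt h0).2 hg) x
  simp only [hg', Finset.mul_sum]
  rw [Finset.sum_comm]
  refine Finset.sum_eq_zero fun k hk => ?_
  rw [← mul_zero (g.coeff k), ← hf k (Finset.mem_range.1 hk), Finset.mul_sum]
  exact Finset.sum_congr rfl fun x _ => by ring

open Polynomial in
/-- A polynomial of low degree with vanishing weighted square sum is zero. -/
lemma eq_zero_of_sum_kravchukWeight_sq {M : ℕ} {p : ℝ} (hp0 : 0 < p) (hp1 : p < 1) {P : ℝ[X]}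
    (hdeg : P.degree < (M + 1 : ℕ))
    (hP : ∑ x ∈ Finset.range (M + 1),
      kravchukWeight M p x * (P.eval (x : ℝ) * P.eval (x : ℝ)) = 0) : P = 0 := by
  have hw : ∀ x ∈ Finset.range (M + 1), 0 < kravchukWeight M p x := fun x hx =>
    kravchukWeight_pos hp0 hp1 (Nat.lt_succ_iff.1 (Finset.mem_range.1 hx))
  rw [Finset.sum_eq_zero_iff_of_nonneg
    fun x hx => mul_nonneg (hw x hx).le (mul_self_nonneg _)] at hP
  refine eq_zero_of_degree_lt_of_eval_index_eq_zero (v := fun x : ℕ => (x : ℝ))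
    (Finset.range (M + 1)) Nat.cast_injective.injOn (by rwa [Finset.card_range]) fun x hx => ?_
  simpa [(hw x hx).ne'] using hP x hx

open Polynomial in
/-- The forward difference of a Kravchuk polynomial is a multiple of an average of two
shifts of the preceding one: both are Kravchuk polynomials for one trial less. -/
lemma kravchuk_forward_difference_recurrence {M m : ℕ} {p : ℝ} (hp0 : 0 < p) (hp1 : p < 1)
    (hm : m ≤ M) {f g : ℝ[X]} (hfm : f.Monic) (hfd : f.natDegree = m + 1)
    (hgm : g.Monic) (hgd : g.natDegree = m)
    (hf : ∀ k < m + 1, ∑ x ∈ Finset.range (M + 1 + 1),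
      kravchukWeight (M + 1) p x * f.eval (x : ℝ) * (x : ℝ) ^ k = 0)
    (hg : ∀ k < m, ∑ x ∈ Finset.range (M + 1 + 1),
      kravchukWeight (M + 1) p x * g.eval (x : ℝ) * (x : ℝ) ^ k = 0) :
    taylor 1 f - f = C ((m : ℝ) + 1) * (g + C p * (taylor 1 g - g)) := by
  have hq : 1 - p ≠ 0 := by linarith
  rw [← sub_eq_zero]
  set P := taylor 1 f - f - C ((m : ℝ) + 1) * (g + C p * (taylor 1 g - g)) with hPdef
  have hfc : f.coeff (m + 1) = 1 := hfd ▸ hfm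
  have hgc : g.coeff m = 1 := by simpa [hgd] using hgm.coeff_natDegree
  have hPdeg : P.degree < m := by
    rw [degree_lt_iff_coeff_zero]
    intro i hi
    have hgt := coeff_taylor_of_natDegree_le 1 hgd.le hi
    rcases hi.eq_or_lt with rfl | hi
    · simp only [hPdef, coeff_sub, coeff_C_mul, coeff_add, hgt,
        coeff_taylor_one_of_natDegree_le hfd.le, hfc, hgc]
      ring
    · simp only [hPdef, coeff_sub, coeff_C_mul, coeff_add, hgt,
        coeff_taylor_of_natDegree_le 1 hfd.le hi,
        coeff_eq_zero_of_natDegree_lt (hgd.trans_lt hi)]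
      ring
  refine eq_zero_of_sum_kravchukWeight_sq hp0 hp1
    (hPdeg.trans_le (by exact_mod_cast hm.trans M.le_succ)) ?_
  set R := taylor (-1) P with hR
  have hReval : ∀ x : ℝ, R.eval x = P.eval (x - 1) := by
    intro x
    rw [hR, taylor_eval, sub_eq_add_neg]
  have hRdeg : R.degree < m := by rwa [hR, degree_taylor]
  have hPn : ∀ i, m ≤ i → P.coeff i = 0 := (degree_lt_iff_coeff_zero _ _).1 hPdeg
  have hRn : ∀ i, m ≤ i → R.coeff i = 0 := (degree_lt_iff_coeff_zero _ _).1 hRdeg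
  have hgP : ((C ((M : ℝ) + 1) - X) * P + X * R : ℝ[X]).degree < m := by
    rw [degree_lt_iff_coeff_zero]
    intro i hi
    cases i with
    | zero => simp [sub_mul, hPn 0 hi]
    | succ i =>
      have hRP : R.coeff i = P.coeff i := by
        have hPd : P.natDegree ≤ i := by
          rw [natDegree_le_iff_coeff_eq_zero]
          exact fun j hj => hPn j (by omega)
        exact coeff_taylor_of_natDegree_le (-1) hPd le_rfl
      simp only [sub_mul, coeff_add, coeff_sub, coeff_C_mul, coeff_X_mul, hPn _ hi, hRP]
      ring
  have hfP : (C (1 - p) * (X * R) - C p * ((C ((M : ℝ) + 1) - X) * P) : ℝ[X]).degree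
      < (m + 1 : ℕ) := by
    rw [degree_lt_iff_coeff_zero]
    intro i hi
    obtain ⟨i, rfl⟩ : ∃ j, i = j + 1 := ⟨i - 1, by omega⟩
    simp only [sub_mul, coeff_sub, coeff_C_mul, coeff_X_mul, hPn i (by omega),
      hPn (i + 1) (by omega), hRn i (by omega)]
    ring
  have hgsum := sum_kravchukWeight_mul_eval_eq_zero hg hgP
  have hfsum := sum_kravchukWeight_mul_eval_eq_zero hf hfP
  have hf0 := sum_kravchukWeight_failure M p fun x => f.eval x * P.eval x
  have hf1 := sum_kravchukWeight_success M p fun x => f.eval x * R.eval x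
  have hg0 := sum_kravchukWeight_failure M p fun x => g.eval x * P.eval x
  have hg1 := sum_kravchukWeight_success M p fun x => g.eval x * R.eval x
  simp only [hReval, add_sub_cancel_right] at hf1 hg1
  simp only [eval_add, eval_sub, eval_mul, eval_C, eval_X, hReval] at hgsum hfsum
  have hgsplit : ∑ x ∈ Finset.range (M + 1), kravchukWeight M p x *
      (((1 - p) * g.eval (x : ℝ) + p * g.eval ((x : ℝ) + 1)) * P.eval (x : ℝ)) = 0 := by
    have hM : ((M : ℝ) + 1) ≠ 0 := by positivity
    refine (mul_eq_zero.1 ?_).resolve_left hM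
    rw [← hgsum]
    trans (M + 1) * (1 - p) * ∑ x ∈ Finset.range (M + 1),
        kravchukWeight M p x * (g.eval (x : ℝ) * P.eval (x : ℝ)) +
      (M + 1) * p * ∑ x ∈ Finset.range (M + 1),
        kravchukWeight M p x * (g.eval ((x : ℝ) + 1) * P.eval (x : ℝ))
    · simp only [Finset.mul_sum, ← Finset.sum_add_distrib]
      exact Finset.sum_congr rfl fun x _ => by ring
    · rw [hg0, hg1, ← Finset.sum_add_distrib]
      exact Finset.sum_congr rfl fun x _ => by ring
  have hfsplit : ∑ x ∈ Finset.range (M + 1), kravchukWeight M p x *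
      ((f.eval ((x : ℝ) + 1) - f.eval (x : ℝ)) * P.eval (x : ℝ)) = 0 := by
    have hM : ((M : ℝ) + 1) * p * (1 - p) ≠ 0 := by positivity
    refine (mul_eq_zero.1 ?_).resolve_left hM
    rw [← hfsum]
    trans (1 - p) * ((M + 1) * p * ∑ x ∈ Finset.range (M + 1),
        kravchukWeight M p x * (f.eval ((x : ℝ) + 1) * P.eval (x : ℝ))) -
      p * ((M + 1) * (1 - p) * ∑ x ∈ Finset.range (M + 1),
        kravchukWeight M p x * (f.eval (x : ℝ) * P.eval (x : ℝ)))
    · simp only [Finset.mul_sum, ← Finset.sum_sub_distrib]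
      exact Finset.sum_congr rfl fun x _ => by ring
    · rw [hf0, hf1, Finset.mul_sum, Finset.mul_sum, ← Finset.sum_sub_distrib]
      exact Finset.sum_congr rfl fun x _ => by ring
  have hPeval : ∀ x : ℝ, P.eval x = f.eval (x + 1) - f.eval x -
      (m + 1) * ((1 - p) * g.eval x + p * g.eval (x + 1)) := by
    intro x
    simp only [hPdef, eval_sub, eval_mul, eval_add, eval_C, taylor_eval]
    ring
  trans ∑ x ∈ Finset.range (M + 1), kravchukWeight M p x *
        ((f.eval ((x : ℝ) + 1) - f.eval (x : ℝ)) * P.eval (x : ℝ)) -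
      (m + 1) * ∑ x ∈ Finset.range (M + 1), kravchukWeight M p x *
        (((1 - p) * g.eval (x : ℝ) + p * g.eval ((x : ℝ) + 1)) * P.eval (x : ℝ))
  · rw [Finset.mul_sum, ← Finset.sum_sub_distrib]
    refine Finset.sum_congr rfl fun x _ => ?_
    nth_rewrite 1 [hPeval]
    ring
  · rw [hfsplit, hgsplit, mul_zero, sub_zero]

lemma poch_succ (a : ℝ) (k : ℕ) : poch a (k + 1) = poch a k * (a + k) :=
  Finset.prod_range_succ _ _

/-- Expansion of the forward difference of the monic Kravchuk polynomial of degree `n`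
in terms of the lower-degree monic Kravchuk polynomials with the same parameters. -/
theorem kravchuk_forward_difference_expansion
    (N : ℕ) (hN : 1 ≤ N) (p : ℝ) (hp0 : 0 < p) (hp1 : p < 1)
    (n : ℕ) (hn1 : 1 ≤ n) (hnN : n ≤ N - 1)
    (K : ℕ → Polynomial ℝ)
    (hmonic : ∀ j ≤ n, (K j).Monic) (hdeg : ∀ j ≤ n, (K j).natDegree = j)
    (horth : ∀ j ≤ n, ∀ k : ℕ, k < j →
      ∑ x ∈ Finset.range (N + 1), (N.choose x : ℝ) * p ^ x * (1 - p) ^ (N - x) *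
        (K j).eval (x : ℝ) * (x : ℝ) ^ k = 0) :
    ∀ x : ℝ, (K n).eval (x + 1) - (K n).eval x =
      n * ∑ j ∈ Finset.range n,
        poch ((j : ℝ) + 1) (n - j - 1) * p ^ (n - j - 1) * (K j).eval x := by
  intro x
  obtain ⟨M, rfl⟩ : ∃ M, N = M + 1 := ⟨N - 1, by omega⟩
  suffices h : ∀ m ≤ n, (K m).eval (x + 1) - (K m).eval x =
      m * ∑ j ∈ Finset.range m,
        poch ((j : ℝ) + 1) (m - j - 1) * p ^ (m - j - 1) * (K j).eval x from h n le_rfl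
  intro m
  induction m with
  | zero =>
    intro h0
    simp [Polynomial.eq_one_of_monic_natDegree_zero (hmonic 0 h0) (hdeg 0 h0)]
  | succ m ih =>
    intro hm
    have hm' : m ≤ n := by omega
    have hrec := congrArg (Polynomial.eval x) (kravchuk_forward_difference_recurrence
      hp0 hp1 (by omega : m ≤ M) (hmonic _ hm) (hdeg _ hm) (hmonic _ hm') (hdeg _ hm')
      (horth _ hm) (horth _ hm'))
    simp only [Polynomial.eval_sub, Polynomial.eval_mul, Polynomial.eval_add,
      Polynomial.eval_C, Polynomial.taylor_eval] at hrec
    rw [hrec, ih hm', Finset.sum_range_succ]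
    have hsum : ∑ j ∈ Finset.range m,
        poch ((j : ℝ) + 1) (m + 1 - j - 1) * p ^ (m + 1 - j - 1) * (K j).eval x =
        p * (m * ∑ j ∈ Finset.range m,
          poch ((j : ℝ) + 1) (m - j - 1) * p ^ (m - j - 1) * (K j).eval x) := by
      simp only [Finset.mul_sum]
      refine Finset.sum_congr rfl fun j hj => ?_
      obtain ⟨i, rfl⟩ : ∃ i, m = j + i + 1 :=
        ⟨m - j - 1, by have := Finset.mem_range.1 hj; omega⟩
      rw [show j + i + 1 + 1 - j - 1 = i + 1 by omega, show j + i + 1 - j - 1 = i by omega,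
        poch_succ]
      push_cast
      ring
    have hlast : poch ((m : ℝ) + 1) (m + 1 - m - 1) * p ^ (m + 1 - m - 1) = 1 := by
      simp [poch]
    rw [hsum, hlast]
    push_cast
    ring
end
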